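/- arXiv:2002.00985 — 2 statements merged into one kernel-verified Lean document; each statement's English description precedes it below -/
import Mathlib

section
/- For every n ≥ 1, the number of quasi-Stirling permutations w of size n with des(w) = n is exactly (n+1)^{n−1}. -/
open Finset
open scoped Classical

/-- Number of descents of a word `w` of length `N` over a linearly ordered
alphabet.  Positions are 0-indexed: a position `i` is a descent if it is the
last position or the letter at `i` is greater than the letter at `i + 1`. -/
noncomputable def desW {α : Type*} [LinearOrder α] {N : ℕ} (w : Fin N → α) : ℕ :=
  (univ.filter fun i : Fin N =>
    (i : ℕ) + 1 = N ∨ ∃ h : (i : ℕ) + 1 < N, w ⟨(i : ℕ) + 1, h⟩ < w i).card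

/-- The set of quasi-Stirling permutations of size `n`, encoded as words
`w : Fin (2 * n) → Fin n` (the letters `1, …, n` are encoded as the elements
of `Fin n`) in which every letter occurs exactly twice and there are no indices
`i < j < l < p` with `w i = w l`, `w j = w p` and `w i ≠ w j`. -/
noncomputable def quasiStirlingSet (n : ℕ) : Finset (Fin (2 * n) → Fin n) :=
  univ.filter fun w =>
    (∀ a : Fin n, (univ.filter fun i => w i = a).card = 2) ∧
    ∀ i j l p : Fin (2 * n), i < j → j < l → l < p →
      w i = w l → w j = w p → w i = w j


inductive QF where
  | nil : QF
  | node : ℕ → QF → QF → QF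

namespace QF

def word : QF → List ℕ
  | nil => []
  | node a v r => a :: (word v ++ a :: word r)

def letters : QF → List ℕ
  | nil => []
  | node a v r => a :: (letters v ++ letters r)

def roots : QF → List ℕ
  | nil => []
  | node a _ r => a :: roots r

def inners : QF → List QF
  | nil => []
  | node _ v r => v :: inners r

def zipn : List ℕ → List QF → QF
  | a :: cs, v :: vs => node a v (zipn cs vs)
  | _, _ => nil

/-- number of adjacent descents -/
def D : List ℕ → ℕ
  | [] => 0
  | [_] => 0
  | a :: b :: t => (if b < a then 1 else 0) + D (b :: t)

def Arr (p : ℕ) (cs : List ℕ) : Prop := D (p :: (cs ++ [p])) = cs.length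

def Inner : QF → Prop
  | nil => True
  | node a v r => (Arr a (roots v) ∧ Inner v) ∧ Inner r

def Good (p : ℕ) (f : QF) : Prop := Arr p (roots f) ∧ Inner f

def NC (l : List ℕ) : Prop := ∀ x y, List.Sublist [x, y, x, y] l → x = y

lemma zipn_roots_inners (f : QF) : zipn (roots f) (inners f) = f := by
  induction f with
  | nil => rfl
  | node a v r _ ih => simp [roots, inners, zipn, ih]

lemma length_inners (f : QF) : (inners f).length = (roots f).length := by
  induction f with
  | nil => rfl
  | node a v r _ ih => simp [roots, inners, ih]

lemma roots_zipn : ∀ (cs : List ℕ) (vs : List QF), cs.length = vs.length → roots (zipn cs vs) = cs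
  | [], [], _ => rfl
  | a :: cs, v :: vs, h => by simp [zipn, roots, roots_zipn cs vs (by simpa using h)]
  | [], _ :: _, h => by simp at h
  | _ :: _, [], h => by simp at h

lemma inners_zipn : ∀ (cs : List ℕ) (vs : List QF), cs.length = vs.length → inners (zipn cs vs) = vs
  | [], [], _ => rfl
  | a :: cs, v :: vs, h => by simp [zipn, inners, inners_zipn cs vs (by simpa using h)]
  | [], _ :: _, h => by simp at h
  | _ :: _, [], h => by simp at h

lemma inner_iff (f : QF) : Inner f ↔ List.Forall₂ Good (roots f) (inners f) := by
  induction f with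
  | nil => simp [Inner, roots, inners]
  | node a v r _ ih => simp [Inner, roots, inners, ih, Good]

lemma letters_perm (f : QF) : (letters f).Perm (roots f ++ (inners f).flatMap letters) := by
  induction f with
  | nil => simp [letters, roots, inners]
  | node a v r _ ih =>
    simp only [letters, roots, inners, List.flatMap_cons, List.cons_append, List.perm_cons]
    refine (List.Perm.append_left _ ih).trans ?_
    rw [← List.append_assoc, ← List.append_assoc]
    exact List.Perm.append_right _ List.perm_append_comm

/-! Descents -/

lemma D_append (l1 : List ℕ) (a : ℕ) (l2 : List ℕ) :
    D (l1 ++ a :: l2) = D (l1 ++ [a]) + D (a :: l2) := by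
  induction l1 with
  | nil => simp [D]
  | cons x t ih =>
    cases t with
    | nil => simp [D]
    | cons y t => simp only [List.cons_append, D] at ih ⊢; omega

lemma D_le (x : ℕ) (cs : List ℕ) (p : ℕ) : D (x :: (cs ++ [p])) ≤ cs.length + 1 := by
  induction cs generalizing x with
  | nil => simp [D]; split_ifs <;> simp
  | cons c t ih => have := ih c; simp only [List.cons_append, D, List.length_cons]; split_ifs <;> omega

lemma D_eq_full (x : ℕ) (cs : List ℕ) (p : ℕ) :
    D (x :: (cs ++ [p])) = cs.length + 1 ↔ (x :: (cs ++ [p])).Pairwise (· > ·) := by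
  induction cs generalizing x with
  | nil => simp [D]
  | cons c t ih =>
    have := D_le c t p
    have ih := ih c
    rw [List.cons_append, List.pairwise_cons, ← ih]
    simp only [D, List.length_cons]
    constructor
    · intro h
      have hc : c < x := by by_contra hc; rw [if_neg hc] at h; omega
      rw [if_pos hc] at h
      have h2 : D (c :: (t ++ [p])) = t.length + 1 := by omega
      refine ⟨?_, h2⟩
      have h3 := List.pairwise_cons.1 (ih.1 h2)
      intro a ha
      rcases List.mem_cons.1 ha with rfl | ha
      · exact hc
      · exact lt_trans (h3.1 a ha) hc
    · rintro ⟨h1, h2⟩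
      rw [if_pos (h1 c (by simp))]; omega

/-- cyclic descending relation -/
def R (p x y : ℕ) : Prop := (y < x ∧ (x < p ↔ y < p)) ∨ (x < p ∧ p < y)

lemma D_low (x : ℕ) (cs : List ℕ) (p : ℕ) (hx : x ≤ p) (hp : p ∉ cs) (hn : x ∉ cs)
    (hnd : cs.Nodup) :
    D (x :: (cs ++ [p])) ≤ cs.length ∧
    (D (x :: (cs ++ [p])) = cs.length ↔ cs.Pairwise (R p) ∧ ∀ c ∈ cs, c < x ∨ p < c) := by
  induction cs generalizing x with
  | nil => simp [D]; omega
  | cons c t ih =>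
    simp only [List.mem_cons, not_or, List.nodup_cons] at hp hn hnd
    simp only [List.cons_append, D, List.length_cons]
    by_cases hcp : c < p
    · obtain ⟨i1, i2⟩ := ih c hcp.le hp.2 hnd.1 hnd.2
      by_cases hcx : c < x
      · rw [if_pos hcx]
        refine ⟨by omega, ?_⟩
        have : (1 + D (c :: (t ++ [p])) = t.length + 1) ↔ D (c :: (t ++ [p])) = t.length := by omega
        rw [this, i2, List.pairwise_cons]
        constructor
        · rintro ⟨h1, h2⟩
          refine ⟨⟨?_, h1⟩, ?_⟩
          · intro a ha
            have := h2 a ha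
            unfold R; omega
          · intro a ha
            rcases List.mem_cons.1 ha with rfl | ha
            · exact Or.inl hcx
            · have := h2 a ha; omega
        · rintro ⟨⟨h1, h2⟩, h3⟩
          refine ⟨h2, fun a ha => ?_⟩
          have := h1 a ha
          unfold R at this; omega
      · rw [if_neg hcx]
        refine ⟨by omega, ?_⟩
        constructor
        · intro h; omega
        · rintro ⟨_, h⟩
          have := h c (by simp)
          omega
    · have hcx : ¬ c < x := by omega
      have hpc : p < c := by omega
      have h1 := D_le c t p
      rw [if_neg hcx, Nat.zero_add]
      refine ⟨h1, ?_⟩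
      rw [D_eq_full, ← List.cons_append, List.pairwise_append]
      constructor
      · rintro ⟨h1, -, h3⟩
        refine ⟨h1.imp_of_mem ?_, fun a ha => Or.inr (h3 a ha p (by simp))⟩
        intro a b ha hb hab
        have := h3 a ha p (by simp)
        have := h3 b hb p (by simp)
        unfold R; omega
      · rintro ⟨h1, h2⟩
        have h4 : ∀ a ∈ c :: t, p < a := by
          intro a ha
          rcases List.mem_cons.1 ha with rfl | ha'
          · exact hpc
          · have := (List.pairwise_cons.1 h1).1 a ha'
            have := h2 a ha
            unfold R at *; omega
        refine ⟨h1.imp_of_mem ?_, by simp, ?_⟩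
        · intro a b ha hb hab
          have := h4 a ha
          have := h4 b hb
          unfold R at hab; omega
        · intro a ha b hb
          have := h4 a ha
          simp only [List.mem_singleton] at hb
          omega

lemma arr_iff (p : ℕ) (cs : List ℕ) (hp : p ∉ cs) (hn : cs.Nodup) :
    Arr p cs ↔ cs.Pairwise (R p) := by
  rw [Arr, (D_low p cs p le_rfl hp hp hn).2]
  constructor
  · exact fun h => h.1
  · refine fun h => ⟨h, fun c hc => ?_⟩
    have : c ≠ p := by rintro rfl; exact hp hc
    omega

lemma exists_arr (p : ℕ) (C : Finset ℕ) (hp : p ∉ C) :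
    ∃ cs : List ℕ, (cs : Multiset ℕ) = C.val ∧ Arr p cs ∧
      ∀ ds : List ℕ, (ds : Multiset ℕ) = C.val → Arr p ds → ds = cs := by
  have key : ∀ ds : List ℕ, (ds : Multiset ℕ) = C.val → p ∉ ds ∧ ds.Nodup := by
    intro ds h
    constructor
    · rw [← Multiset.mem_coe, h]; exact hp
    · rw [← Multiset.coe_nodup, h]; exact C.nodup
  let A := (C.filter (· < p)).sort (· ≥ ·)
  let B := (C.filter (¬ · < p)).sort (· ≥ ·)
  have hval : ((A ++ B : List ℕ) : Multiset ℕ) = C.val := by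
    rw [← Multiset.coe_add, Finset.sort_eq, Finset.sort_eq, Finset.filter_val, Finset.filter_val,
      Multiset.filter_add_not]
  have hA : ∀ x ∈ A, x ∈ C ∧ x < p := fun x hx => by
    simpa [A] using hx
  have hB : ∀ x ∈ B, x ∈ C ∧ p < x := fun x hx => by
    have h : x ∈ C ∧ p ≤ x := by simpa [B] using hx
    exact ⟨h.1, lt_of_le_of_ne h.2 (by rintro rfl; exact hp h.1)⟩
  have sA : A.Pairwise (· > ·) := (Finset.sortedGT_sort _).pairwise
  have sB : B.Pairwise (· > ·) := (Finset.sortedGT_sort _).pairwise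
  have hpw : (A ++ B).Pairwise (R p) := by
    rw [List.pairwise_append]
    refine ⟨sA.imp_of_mem ?_, sB.imp_of_mem ?_, ?_⟩
    · intro a b ha hb h
      exact Or.inl ⟨h, by simp [(hA a ha).2, (hA b hb).2]⟩
    · intro a b ha hb h
      have := (hB a ha).2
      have := (hB b hb).2
      exact Or.inl ⟨h, by omega⟩
    · intro a ha b hb
      exact Or.inr ⟨(hA a ha).2, (hB b hb).2⟩
  obtain ⟨k1, k2⟩ := key _ hval
  refine ⟨A ++ B, hval, (arr_iff p _ k1 k2).2 hpw, ?_⟩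
  intro ds hds harr
  obtain ⟨d1, d2⟩ := key _ hds
  have hd := (arr_iff p _ d1 d2).1 harr
  have hperm : ds.Perm (A ++ B) := Multiset.coe_eq_coe.1 (hds.trans hval.symm)
  refine hperm.eq_of_pairwise ?_ hd hpw
  intro a b _ _ h1 h2
  unfold R at h1 h2
  omega

/-! Counting -/

def N : ℕ → ℕ → ℕ
  | _, 0 => 1
  | k, r + 1 => k * (k + r + 1) ^ r

lemma N_mul (k r : ℕ) : (k + r) * N k r = k * (k + r) ^ r := by
  cases r with
  | zero => simp [N]
  | succ r => simp only [N]; ring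

lemma sum_choose_mul (m r : ℕ) :
    ∑ j ∈ range (r + 1), r.choose j * j * m ^ (r - j) = r * (m + 1) ^ (r - 1) := by
  cases r with
  | zero => simp
  | succ s =>
    rw [Finset.sum_range_succ']
    simp only [Nat.add_sub_add_right, mul_zero, zero_mul, add_zero, Nat.add_sub_cancel]
    rw [add_comm m 1, add_pow, Finset.mul_sum]
    refine Finset.sum_congr rfl fun j _ => ?_
    have := Nat.add_one_mul_choose_eq s j
    rw [← this, one_pow]
    simp only [Nat.cast_id]
    ring

lemma N_rec (k r : ℕ) : N (k + 1) r = ∑ j ∈ range (r + 1), r.choose j * N (k + j) (r - j) := by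
  cases r with
  | zero => simp [N]
  | succ s =>
    have hm : 0 < k + (s + 1) := by omega
    refine Nat.eq_of_mul_eq_mul_left hm ?_
    rw [Finset.mul_sum]
    have h1 : ∀ j ∈ range (s + 1 + 1), (k + (s + 1)) * ((s + 1).choose j * N (k + j) (s + 1 - j)) =
        k * ((s + 1).choose j * (k + (s + 1)) ^ (s + 1 - j)) +
          (s + 1).choose j * j * (k + (s + 1)) ^ (s + 1 - j) := by
      intro j hj
      have hj : j ≤ s + 1 := by simp at hj; omega
      have h := N_mul (k + j) (s + 1 - j)
      have e : k + j + (s + 1 - j) = k + (s + 1) := by omega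
      rw [e] at h
      calc _ = (s + 1).choose j * ((k + (s + 1)) * N (k + j) (s + 1 - j)) := by ring
        _ = _ := by rw [h]; ring
    rw [Finset.sum_congr rfl h1, Finset.sum_add_distrib, sum_choose_mul, ← Finset.mul_sum]
    have h2 : ∑ j ∈ range (s + 1 + 1), (s + 1).choose j * (k + (s + 1)) ^ (s + 1 - j) =
        (k + (s + 1) + 1) ^ (s + 1) := by
      rw [add_comm (k + (s + 1)) 1, add_pow]
      refine Finset.sum_congr rfl fun j _ => ?_
      simp [mul_comm]
    rw [h2]
    simp only [N, Nat.add_sub_cancel]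
    ring

def P (L : List ℕ) (R : Finset ℕ) (fs : List QF) : Prop :=
  List.Forall₂ Good L fs ∧ ((fs.flatMap letters : List ℕ) : Multiset ℕ) = R.val

lemma forall2_append_iff {α β : Type*} {Q : α → β → Prop} (l1 l2 : List α) (m1 m2 : List β)
    (h : l1.length = m1.length) :
    List.Forall₂ Q (l1 ++ l2) (m1 ++ m2) ↔ List.Forall₂ Q l1 m1 ∧ List.Forall₂ Q l2 m2 := by
  induction l1 generalizing m1 with
  | nil => cases m1 with
    | nil => simp
    | cons => simp at h
  | cons a l ih => cases m1 with
    | nil => simp at h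
    | cons b m => simp [ih m (by simpa using h), and_assoc]

lemma P_cons_iff (p : ℕ) (L : List ℕ) (R C : Finset ℕ) (f : QF) (fs : List QF)
    (hC : C ⊆ R) (hr : (roots f : Multiset ℕ) = C.val) (ha : Arr p (roots f)) :
    P (p :: L) R (f :: fs) ↔ P (roots f ++ L) (R \ C) (inners f ++ fs) := by
  unfold P
  rw [forall2_append_iff _ _ _ _ (length_inners f).symm, ← inner_iff, List.forall₂_cons, Good]
  have h1 : (((f :: fs).flatMap letters : List ℕ) : Multiset ℕ) =
      C.val + (((inners f ++ fs).flatMap letters : List ℕ) : Multiset ℕ) := by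
    rw [← hr, Multiset.coe_add, Multiset.coe_eq_coe, List.flatMap_cons, List.flatMap_append,
      ← List.append_assoc]
    exact (letters_perm f).append_right _
  have h2 : R.val = C.val + (R \ C).val := by
    rw [Finset.sdiff_val, add_tsub_cancel_of_le (Finset.val_le_iff.2 hC)]
  rw [h1, h2, add_right_inj]
  simp [ha]

lemma roots_of_P (p : ℕ) (L : List ℕ) (R : Finset ℕ) (f : QF) (fs : List QF)
    (h : P (p :: L) R (f :: fs)) :
    ∃ C ⊆ R, (roots f : Multiset ℕ) = C.val := by
  have hle : (roots f : Multiset ℕ) ≤ R.val := by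
    rw [← h.2, List.flatMap_cons, ← Multiset.coe_add]
    refine le_trans ?_ (Multiset.le_add_right _ _)
    rw [Multiset.coe_eq_coe.2 (letters_perm f), ← Multiset.coe_add]
    exact Multiset.le_add_right _ _
  exact ⟨⟨roots f, Multiset.nodup_of_le hle R.nodup⟩, Finset.val_le_iff.1 hle, rfl⟩

theorem count_P (s : ℕ) : ∀ (L : List ℕ) (R : Finset ℕ), L.length + R.card ≤ s →
    (∀ x ∈ L, x ∉ R) → ∃ T : Finset (List QF), (∀ fs, fs ∈ T ↔ P L R fs) ∧
      T.card = N L.length R.card := by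
  induction s with
  | zero =>
    intro L R hs _
    have hL : L = [] := List.length_eq_zero_iff.1 (by omega)
    have hR : R = ∅ := Finset.card_eq_zero.1 (by omega)
    subst hL hR
    refine ⟨{[]}, fun fs => ?_, by simp [N]⟩
    cases fs <;> simp [P]
  | succ s ih =>
    intro L R hs hd
    cases L with
    | nil =>
      by_cases hR : R = ∅
      · subst hR
        refine ⟨{[]}, fun fs => ?_, by simp [N]⟩
        cases fs <;> simp [P]
      · refine ⟨∅, fun fs => ?_, ?_⟩
        · cases fs with
          | nil =>
            simp only [P, Finset.notMem_empty, false_iff, not_and]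
            intro _ h
            exact hR (Finset.val_eq_zero.1 (by simpa using h.symm))
          | cons => simp [P]
        · obtain ⟨r, hr⟩ := Nat.exists_eq_succ_of_ne_zero (Finset.card_ne_zero.2
            (Finset.nonempty_iff_ne_empty.2 hR))
          simp [hr, N]
    | cons p L =>
      have hp : p ∉ R := hd p (by simp)
      have hex : ∀ C : Finset ℕ, ∃ cs : List ℕ, C ⊆ R → (cs : Multiset ℕ) = C.val ∧ Arr p cs ∧
          ∀ ds : List ℕ, (ds : Multiset ℕ) = C.val → Arr p ds → ds = cs := by
        intro C
        by_cases hC : C ⊆ R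
        · obtain ⟨cs, h⟩ := exists_arr p C (fun h => hp (hC h))
          exact ⟨cs, fun _ => h⟩
        · exact ⟨[], fun h => absurd h hC⟩
      choose ch hch using hex
      have hlen : ∀ C ⊆ R, (ch C).length = C.card := by
        intro C hC
        rw [← Multiset.coe_card, (hch C hC).1]; rfl
      have hex2 : ∀ C : Finset ℕ, ∃ T : Finset (List QF), C ⊆ R →
          (∀ fs, fs ∈ T ↔ P (ch C ++ L) (R \ C) fs) ∧
          T.card = N (L.length + C.card) (R.card - C.card) := by
        intro C
        by_cases hC : C ⊆ R
        · have hcard := Finset.card_sdiff_of_subset hC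
          have hle := Finset.card_le_card hC
          obtain ⟨T, h1, h2⟩ := ih (ch C ++ L) (R \ C) (by
            rw [List.length_append, hlen C hC, hcard]
            simp only [List.length_cons] at hs
            omega) (by
            intro x hx hxR
            rw [Finset.mem_sdiff] at hxR
            rcases List.mem_append.1 hx with h | h
            · rw [← Multiset.mem_coe, (hch C hC).1] at h
              exact hxR.2 h
            · exact hd x (by simp [h]) hxR.1)
          refine ⟨T, fun _ => ⟨h1, ?_⟩⟩
          rw [h2, List.length_append, hlen C hC, hcard, add_comm]
        · exact ⟨∅, fun h => absurd h hC⟩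
      choose T hT using hex2
      let asm : Finset ℕ → List QF → List QF := fun C gs =>
        zipn (ch C) (gs.take (ch C).length) :: gs.drop (ch C).length
      -- elements of `T C`
      have hasm : ∀ C ⊆ R, ∀ gs ∈ T C, ∃ f fs, asm C gs = f :: fs ∧ roots f = ch C ∧
          inners f ++ fs = gs := by
        intro C hC gs hgs
        have h := ((hT C hC).1 gs).1 hgs
        have hl := h.1.length_eq
        have hl2 : (ch C).length = (gs.take (ch C).length).length := by
          rw [List.length_append] at hl
          rw [List.length_take]; omega
        exact ⟨_, _, rfl, roots_zipn _ _ hl2, by rw [inners_zipn _ _ hl2, List.take_append_drop]⟩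
      refine ⟨R.powerset.biUnion fun C => (T C).image (asm C), ?_, ?_⟩
      · intro fs
        simp only [Finset.mem_biUnion, Finset.mem_powerset, Finset.mem_image]
        constructor
        · rintro ⟨C, hC, gs, hgs, rfl⟩
          obtain ⟨f, fs, h1, h2, h3⟩ := hasm C hC gs hgs
          rw [h1, P_cons_iff p L R C f fs hC (by rw [h2]; exact (hch C hC).1)
            (by rw [h2]; exact (hch C hC).2.1), h2, h3]
          exact ((hT C hC).1 gs).1 hgs
        · intro h
          cases fs with
          | nil => simp [P] at h
          | cons f fs =>
            obtain ⟨C, hC, hr⟩ := roots_of_P p L R f fs h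
            have ha : Arr p (roots f) := (List.forall₂_cons.1 h.1).1.1
            have hrc := (hch C hC).2.2 _ hr ha
            refine ⟨C, hC, inners f ++ fs, ?_, ?_⟩
            · rw [(hT C hC).1, ← hrc]
              exact (P_cons_iff p L R C f fs hC hr ha).1 h
            · simp only [asm, ← hrc]
              rw [List.take_left' (length_inners f), List.drop_left' (length_inners f),
                zipn_roots_inners]
      · rw [Finset.card_biUnion]
        · rw [List.length_cons, N_rec, Finset.sum_powerset]
          refine Finset.sum_congr rfl fun j _ => ?_
          rw [← Finset.card_powersetCard, ← smul_eq_mul, ← Finset.sum_const]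
          refine Finset.sum_congr rfl fun C hC => ?_
          obtain ⟨hC, hj⟩ := Finset.mem_powersetCard.1 hC
          rw [Finset.card_image_of_injOn, (hT C hC).2, hj]
          intro g1 h1 g2 h2 he
          obtain ⟨f, fs, a1, a2, a3⟩ := hasm C hC g1 h1
          obtain ⟨f', fs', b1, b2, b3⟩ := hasm C hC g2 h2
          have he : asm C g1 = asm C g2 := he
          rw [a1, b1] at he
          injection he with e1 e2
          rw [← a3, ← b3, e1, e2]
        · intro C hC C' hC' hne
          rw [Finset.mem_coe, Finset.mem_powerset] at hC hC'
          rw [Function.onFun, Finset.disjoint_left]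
          rintro x hx hx'
          obtain ⟨g1, h1, e1⟩ := Finset.mem_image.1 hx
          obtain ⟨g2, h2, e2⟩ := Finset.mem_image.1 hx'
          obtain ⟨f, fs, a1, a2, a3⟩ := hasm C hC g1 h1
          obtain ⟨f', fs', b1, b2, b3⟩ := hasm C' hC' g2 h2
          have he := e1.trans e2.symm
          rw [a1, b1] at he
          injection he with e1 e2
          apply hne
          apply Finset.val_injective
          rw [← (hch C hC).1, ← (hch C' hC').1, ← a2, ← b2, e1]

/-! Words -/

lemma count_word (a : ℕ) (f : QF) : (word f).count a = 2 * (letters f).count a := by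
  induction f with
  | nil => simp [word, letters]
  | node b v r ih1 ih2 =>
    simp only [word, letters, List.count_cons, List.count_append, ih1, ih2]
    split_ifs <;> omega

lemma length_word (f : QF) : (word f).length = 2 * (letters f).length := by
  induction f with
  | nil => simp [word, letters]
  | node b v r ih1 ih2 =>
    simp only [word, letters, List.length_cons, List.length_append, ih1, ih2]
    omega

lemma mem_word (a : ℕ) (f : QF) : a ∈ word f ↔ a ∈ letters f := by
  rw [← List.count_pos_iff, ← List.count_pos_iff, count_word]; omega

lemma nodup_node {a : ℕ} {v r : QF} (h : (letters (node a v r)).Nodup) :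
    a ∉ word v ∧ a ∉ word r ∧ (letters v).Nodup ∧ (letters r).Nodup ∧
      ∀ x, x ∈ word v → x ∉ word r := by
  simp only [letters, List.nodup_cons, List.mem_append, not_or, List.nodup_append'] at h
  simp only [mem_word]
  exact ⟨h.1.1, h.1.2, h.2.1, h.2.2.1, fun x h1 h2 => h.2.2.2 h1 h2⟩

lemma NC_word (f : QF) (h : (letters f).Nodup) : NC (word f) := by
  induction f with
  | nil => intro x y h; simp [word] at h
  | node a v r ihv ihr =>
    obtain ⟨h1, h2, h3, h4, h5⟩ := nodup_node h
    have iv := ihv h3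
    have ir := ihr h4
    intro x y hs
    by_contra hxy
    rw [word, List.sublist_cons_iff] at hs
    rcases hs with hs | ⟨m, hm, hs⟩
    · obtain ⟨m1, m2, hm, s1, s2⟩ := List.sublist_append_iff.1 hs
      have t1 : ∀ z ∈ m1, z ∈ word v := fun z hz => s1.subset hz
      have t2 : ∀ z ∈ m2, z = a ∨ z ∈ word r := fun z hz => List.mem_cons.1 (s2.subset hz)
      rcases m1 with _ | ⟨b1, _ | ⟨b2, _ | ⟨b3, _ | ⟨b4, m1⟩⟩⟩⟩
      · simp only [List.nil_append] at hm
        subst hm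
        rcases List.sublist_cons_iff.1 s2 with s2 | ⟨m, hm, s2⟩
        · exact hxy (ir x y s2)
        · simp only [List.cons.injEq] at hm
          obtain ⟨rfl, rfl⟩ := hm
          exact h2 (s2.subset (by simp))
      · simp only [List.cons_append, List.nil_append, List.cons.injEq] at hm
        obtain ⟨rfl, rfl⟩ := hm
        have q1 := t1 x (by simp)
        rcases t2 x (by simp) with rfl | h
        · exact h1 q1
        · exact h5 x q1 h
      · simp only [List.cons_append, List.nil_append, List.cons.injEq] at hm
        obtain ⟨rfl, rfl, rfl⟩ := hm
        have q1 := t1 x (by simp)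
        rcases t2 x (by simp) with rfl | h
        · exact h1 q1
        · exact h5 x q1 h
      · simp only [List.cons_append, List.nil_append, List.cons.injEq] at hm
        obtain ⟨rfl, rfl, rfl, rfl⟩ := hm
        have q1 := t1 y (by simp)
        rcases t2 y (by simp) with rfl | h
        · exact h1 q1
        · exact h5 y q1 h
      · have : m1 = [] := by
          have := congrArg List.length hm
          simp only [List.length_cons, List.length_append, List.length_nil] at this
          exact List.length_eq_zero_iff.1 (by omega)
        subst this
        simp only [List.cons_append, List.nil_append, List.cons.injEq] at hm
        obtain ⟨rfl, rfl, rfl, rfl, rfl⟩ := hm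
        exact hxy (iv _ _ s1)
    · simp only [List.cons.injEq] at hm
      obtain ⟨rfl, rfl⟩ := hm
      obtain ⟨m1, m2, hm, s1, s2⟩ := List.sublist_append_iff.1 hs
      have t1 : ∀ z ∈ m1, z ∈ word v := fun z hz => s1.subset hz
      have t2 : ∀ z ∈ m2, z = x ∨ z ∈ word r := fun z hz => List.mem_cons.1 (s2.subset hz)
      rcases m1 with _ | ⟨b1, _ | ⟨b2, m1⟩⟩
      · simp only [List.nil_append] at hm
        subst hm
        rcases List.sublist_cons_iff.1 s2 with s2 | ⟨m, hm, s2⟩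
        · exact h2 (s2.subset (by simp))
        · simp only [List.cons.injEq] at hm
          exact hxy hm.1.symm
      · simp only [List.cons_append, List.nil_append, List.cons.injEq] at hm
        obtain ⟨rfl, rfl⟩ := hm
        rcases t2 y (by simp) with h | h
        · exact hxy h.symm
        · exact h5 y (t1 y (by simp)) h
      · simp only [List.cons_append, List.cons.injEq] at hm
        exact h1 (t1 x (by simp [hm.2.1]))

lemma word_inj (f g : QF) (hf : (letters f).Nodup) (hg : (letters g).Nodup)
    (h : word f = word g) : f = g := by
  induction f generalizing g with
  | nil => cases g with
    | nil => rfl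
    | node => simp [word] at h
  | node a v r ihv ihr =>
    cases g with
    | nil => simp [word] at h
    | node b v' r' =>
      obtain ⟨h1, h2, h3, h4, h5⟩ := nodup_node hf
      obtain ⟨k1, k2, k3, k4, k5⟩ := nodup_node hg
      simp only [word, List.cons.injEq] at h
      obtain ⟨rfl, h⟩ := h
      obtain ⟨e1, -, e2⟩ := (List.append_cons_inj_of_notMem h1 h2).1 h
      rw [ihv v' h3 k3 e1, ihr r' h4 k4 e2]

lemma exists_word (s : ℕ) : ∀ l : List ℕ, l.length ≤ s → NC l → (∀ a ∈ l, l.count a = 2) →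
    ∃ f : QF, word f = l := by
  induction s with
  | zero =>
    intro l hl _ _
    exact ⟨nil, by simp [word, List.length_eq_zero_iff.1 (Nat.le_zero.1 hl)]⟩
  | succ s ih =>
    intro l hl hnc hc
    cases l with
    | nil => exact ⟨nil, rfl⟩
    | cons a t =>
      have hat : t.count a = 1 := by
        have := hc a (by simp)
        simpa using this
      obtain ⟨v, r, hvr⟩ := List.append_of_mem (List.count_pos_iff.1 (by omega : 0 < t.count a))
      subst hvr
      have h0 : v.count a = 0 ∧ r.count a = 0 := by
        simp only [List.count_append, List.count_cons_self] at hat; omega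
      have hav : a ∉ v := List.count_eq_zero.1 h0.1
      have har : a ∉ r := List.count_eq_zero.1 h0.2
      have hdis : ∀ x, x ∈ v → x ∉ r := by
        intro x hx hx'
        have : a = x := hnc a x (by
          refine List.Sublist.cons_cons a ?_
          exact (List.singleton_sublist.2 hx).append
            (List.Sublist.cons_cons a (List.singleton_sublist.2 hx')))
        subst this
        exact hav hx
      have hsv : v.Sublist (a :: (v ++ a :: r)) := (List.sublist_append_left _ _).cons a
      have hsr : r.Sublist (a :: (v ++ a :: r)) :=
        (((List.sublist_cons_self a r)).trans (List.sublist_append_right _ _)).cons a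
      simp only [List.length_cons, List.length_append] at hl
      obtain ⟨f, hf⟩ := ih v (by omega) (fun x y h => hnc x y (h.trans hsv)) (by
        intro x hx
        have h1 := hc x (hsv.subset hx)
        have h2 : r.count x = 0 := List.count_eq_zero.2 (hdis x hx)
        have h3 : a ≠ x := by rintro rfl; exact hav hx
        simpa [List.count_cons, h2, h3] using h1)
      obtain ⟨g, hg⟩ := ih r (by omega) (fun x y h => hnc x y (h.trans hsr)) (by
        intro x hx
        have h1 := hc x (hsr.subset hx)
        have h2 : v.count x = 0 := List.count_eq_zero.2 (fun h => hdis x h hx)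
        have h3 : a ≠ x := by rintro rfl; exact har hx
        simpa [List.count_cons, h2, h3] using h1)
      exact ⟨node a f g, by rw [word, hf, hg]⟩

def innerD : QF → ℕ
  | nil => 0
  | node a v r => D (a :: (word v ++ [a])) + innerD r

lemma D_word (x p : ℕ) (f : QF) :
    D (x :: (word f ++ [p])) = D (x :: (roots f ++ [p])) + innerD f := by
  induction f generalizing x with
  | nil => simp [word, roots, innerD]
  | node a v r _ ih =>
    have := D_append (a :: word v) a (word r ++ [p])
    simp only [word, roots, innerD, List.cons_append, List.append_assoc, D] at this ⊢
    rw [this, ih a]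
    omega

lemma roots_sub (f : QF) : (roots f).Sublist (letters f) := by
  induction f with
  | nil => simp [roots, letters]
  | node a v r _ ih =>
    exact List.Sublist.cons_cons a (ih.trans (List.sublist_append_right _ _))

lemma D_roots_le (p : ℕ) (f : QF) (h : (letters f).Nodup) (hp : p ∉ letters f) :
    D (p :: (roots f ++ [p])) ≤ (roots f).length :=
  have hp' : p ∉ roots f := fun h => hp ((roots_sub f).subset h)
  (D_low p _ p le_rfl hp' hp' (h.sublist (roots_sub f))).1

lemma innerD_le (f : QF) (h : (letters f).Nodup) :
    innerD f + (roots f).length ≤ (letters f).length ∧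
    (innerD f + (roots f).length = (letters f).length ↔ Inner f) := by
  induction f with
  | nil => simp [innerD, roots, letters, Inner]
  | node a v r ihv ihr =>
    obtain ⟨h1, h2, h3, h4, h5⟩ := nodup_node h
    obtain ⟨iv1, iv2⟩ := ihv h3
    obtain ⟨ir1, ir2⟩ := ihr h4
    rw [mem_word] at h1
    have := D_roots_le a v h3 h1
    simp only [innerD, roots, letters, Inner, List.length_cons, List.length_append, ← iv2, ← ir2,
      Arr, D_word]
    omega

lemma good_iff (p : ℕ) (f : QF) (h : (letters f).Nodup) (hp : p ∉ letters f) :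
    D (p :: (word f ++ [p])) = (letters f).length ↔ Good p f := by
  have h1 := D_roots_le p f h hp
  obtain ⟨h2, h3⟩ := innerD_le f h
  rw [Good, ← h3, D_word, Arr]
  omega

lemma desW_succ {α : Type*} [LinearOrder α] (N : ℕ) (w : Fin (N + 1) → α) :
    desW w = (if N = 0 ∨ ∃ h : 1 < N + 1, w ⟨1, h⟩ < w 0 then 1 else 0) +
        desW (fun i : Fin N => w i.succ) := by
  unfold desW
  rw [Fin.card_filter_univ_succ]
  have h0 : (((0 : Fin (N + 1)) : ℕ) + 1 = N + 1 ∨ ∃ h : ((0 : Fin (N + 1)) : ℕ) + 1 < N + 1,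
      w ⟨((0 : Fin (N + 1)) : ℕ) + 1, h⟩ < w 0) ↔ (N = 0 ∨ ∃ h : 1 < N + 1, w ⟨1, h⟩ < w 0) := by
    apply or_congr
    · simp
    · exact Iff.rfl
  have h1 : (univ.filter fun i : Fin N => (i.succ : ℕ) + 1 = N + 1 ∨
      ∃ h : (i.succ : ℕ) + 1 < N + 1, w ⟨(i.succ : ℕ) + 1, h⟩ < w i.succ) =
      (univ.filter fun i : Fin N => (i : ℕ) + 1 = N ∨
      ∃ h : (i : ℕ) + 1 < N, w (Fin.succ ⟨(i : ℕ) + 1, h⟩) < w i.succ) := by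
    ext i
    simp only [Finset.mem_filter, Finset.mem_univ, true_and]
    apply or_congr
    · simp
    · exact ⟨fun ⟨h, h'⟩ => ⟨by simpa using h, h'⟩, fun ⟨h, h'⟩ => ⟨by simpa using h, h'⟩⟩
  simp only [h0]
  split_ifs
  · rw [add_comm]; congr 2
  · rw [zero_add]; congr 2

lemma desW_eq {α : Type*} [LinearOrder α] (g : α → ℕ) (hg : StrictMono g) (h0 : ∀ a, 0 < g a)
    (N : ℕ) (w : Fin N → α) : D ((List.ofFn w).map g ++ [0]) = desW w := by
  induction N with
  | zero => simp [desW, D]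
  | succ N ih =>
    rw [List.ofFn_succ, desW_succ, ← ih (fun i => w i.succ)]
    cases N with
    | zero => rw [if_pos (Or.inl rfl)]; simp [D, h0]
    | succ N =>
      rw [List.ofFn_succ]
      simp only [List.map_cons, List.cons_append, D, hg.lt_iff_lt]
      congr 1
      have : (N + 1 = 0 ∨ ∃ h : 1 < N + 1 + 1, w ⟨1, h⟩ < w 0) ↔ w (Fin.succ 0) < w 0 := by
        constructor
        · rintro (h | ⟨_, h⟩)
          · omega
          · exact h
        · intro h
          exact Or.inr ⟨by omega, h⟩
      by_cases hh : w (Fin.succ 0) < w 0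
      · rw [if_pos hh, if_pos (this.2 hh)]
      · rw [if_neg hh, if_neg (mt this.1 hh)]

lemma count_ofFn {α : Type*} [DecidableEq α] (a : α) (N : ℕ) (w : Fin N → α) :
    (univ.filter fun i => w i = a).card = (List.ofFn w).count a := by
  induction N with
  | zero => simp
  | succ N ih =>
    rw [Fin.card_filter_univ_succ, List.ofFn_succ, List.count_cons, ← ih (fun i => w i.succ)]
    by_cases h : w 0 = a <;> simp [h]

lemma NC_ofFn {α : Type*} (g : α → ℕ) (hg : Function.Injective g) (N : ℕ) (w : Fin N → α) :
    NC ((List.ofFn w).map g) ↔ ∀ i j l p : Fin N, i < j → j < l →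
      l < p → w i = w l → w j = w p → w i = w j := by
  have e : (List.ofFn w).map g = (List.finRange N).map (g ∘ w) := by
    rw [List.ofFn_eq_map, List.map_map]
  rw [e]
  constructor
  · intro h i j l p hij hjl hlp h1 h2
    apply hg
    apply h
    have hpw : [i, j, l, p].Pairwise (· < ·) := by
      simp only [List.pairwise_cons, List.mem_cons, List.not_mem_nil, or_false, forall_eq_or_imp,
        forall_eq, IsEmpty.forall_iff, implies_true, List.Pairwise.nil, and_true]
      exact ⟨⟨hij, hij.trans hjl, (hij.trans hjl).trans hlp⟩, ⟨hjl, hjl.trans hlp⟩, hlp⟩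
    have hsub : [i, j, l, p].Sublist (List.finRange N) := by
      refine List.sublist_of_subperm_of_sortedLE ?_ ?_ ?_
      · have hnd : [i, j, l, p].Nodup := hpw.imp fun h => ne_of_lt h
        exact List.subperm_of_subset hnd (fun x _ => List.mem_finRange x)
      · exact (hpw.imp le_of_lt).sortedLE
      · exact (List.pairwise_le_finRange N).sortedLE
    have := hsub.map (g ∘ w)
    simpa [← h1, ← h2] using this
  · intro h x y hs
    obtain ⟨m, hm, he⟩ := List.sublist_map_iff.1 hs
    have hpw := (List.pairwise_lt_finRange N).sublist hm
    have hlen := congrArg List.length he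
    rcases m with _ | ⟨i, _ | ⟨j, _ | ⟨l, _ | ⟨p, _ | ⟨q, m⟩⟩⟩⟩⟩
    all_goals try (simp at hlen; done)
    · clear hlen
      simp only [List.map_cons, List.map_nil, List.cons.injEq, Function.comp, and_true] at he
      obtain ⟨e1, e2, e3, e4⟩ := he
      simp only [List.pairwise_cons, List.mem_cons, List.not_mem_nil, or_false, forall_eq_or_imp,
        forall_eq] at hpw
      rw [e1, e2]
      exact congrArg g (h i j l p hpw.1.1 hpw.2.1.1 hpw.2.2.1 (hg (e1.symm.trans e3))
        (hg (e2.symm.trans e4)))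

end QF

open QF

/-- The number of quasi-Stirling permutations of size `n` with exactly `n`
descents is `(n+1)^(n-1)`. -/
theorem card_quasiStirling_with_n_descents (n : ℕ) (hn : 1 ≤ n) :
    ((quasiStirlingSet n).filter fun w => desW w = n).card = (n + 1) ^ (n - 1) := by
  obtain ⟨T, hT, hcard⟩ := count_P (1 + n) [0] (Finset.Icc 1 n) (by simp) (by simp)
  have hN : T.card = (n + 1) ^ (n - 1) := by
    rw [hcard]
    obtain ⟨m, rfl⟩ := Nat.exists_eq_add_of_le' hn
    simp [N]; ring
  rw [← hN]
  let g : Fin n → ℕ := fun a => a + 1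
  have hg : StrictMono g := fun a b h => by simpa [g] using h
  let lw : (Fin (2 * n) → Fin n) → List ℕ := fun w => (List.ofFn w).map g
  have hlw : Function.Injective lw := by
    intro w w' h
    exact List.ofFn_injective (List.map_injective_iff.2 hg.injective h)
  let wd : List QF → List ℕ := fun fs => fs.flatMap word
  have hTf : ∀ fs ∈ T, ∃ f, fs = [f] ∧ Good 0 f ∧ (letters f : Multiset ℕ) = (Finset.Icc 1 n).val := by
    intro fs h
    obtain ⟨h1, h2⟩ := (hT fs).1 h
    match fs, h1, h2 with
    | [f], h1, h2 => exact ⟨f, rfl, by simpa using h1, by simpa using h2⟩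
  have hnd : ∀ f, (letters f : Multiset ℕ) = (Finset.Icc 1 n).val → (letters f).Nodup ∧
      (letters f).length = n ∧ ∀ x, x ∈ letters f ↔ 1 ≤ x ∧ x ≤ n := by
    intro f hf
    refine ⟨?_, ?_, ?_⟩
    · rw [← Multiset.coe_nodup, hf]; exact Finset.nodup _
    · rw [← Multiset.coe_card, hf]; simp
    · intro x; rw [← Multiset.mem_coe, hf]; simp
  have hcnt : ∀ (w : Fin (2 * n) → Fin n) (a : Fin n),
      (univ.filter fun i => w i = a).card = (lw w).count (g a) := by
    intro w a
    rw [count_ofFn, List.count_map_of_injective _ _ hg.injective]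
  have hnc : ∀ (w : Fin (2 * n) → Fin n), NC (lw w) ↔ ∀ i j l p : Fin (2 * n), i < j → j < l →
      l < p → w i = w l → w j = w p → w i = w j := by
    intro w
    exact NC_ofFn g hg.injective _ w
  have hdes : ∀ (w : Fin (2 * n) → Fin n), desW w = D (0 :: (lw w ++ [0])) := by
    intro w
    rw [← desW_eq g hg (fun a => Nat.succ_pos _)]
    change D (lw w ++ [0]) = _
    cases lw w <;> simp [D]
  have himg : ((quasiStirlingSet n).filter fun w => desW w = n).image lw = T.image wd := by
    ext l
    simp only [Finset.mem_image, Finset.mem_filter, quasiStirlingSet, Finset.mem_univ, true_and]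
    constructor
    · rintro ⟨w, ⟨⟨h1, h2⟩, h3⟩, rfl⟩
      have hmem : ∀ x ∈ lw w, ∃ a, x = g a := by
        intro x hx
        obtain ⟨a, _, rfl⟩ := List.mem_map.1 hx
        exact ⟨a, rfl⟩
      obtain ⟨f, hf⟩ := exists_word _ (lw w) le_rfl ((hnc w).2 h2) (by
        intro x hx
        obtain ⟨a, rfl⟩ := hmem x hx
        rw [← hcnt, h1])
      have hval : (letters f : Multiset ℕ) = (Finset.Icc 1 n).val := by
        ext x
        have hx := count_word x f
        rw [Multiset.coe_count]
        rw [hf] at hx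
        by_cases hxm : x ∈ Finset.Icc 1 n
        · rw [Multiset.count_eq_one_of_mem (Finset.nodup _) hxm]
          rw [Finset.mem_Icc] at hxm
          have : g ⟨x - 1, by omega⟩ = x := by simp only [g]; omega
          have h := hcnt w ⟨x - 1, by omega⟩
          rw [this, h1] at h
          omega
        · rw [Multiset.count_eq_zero_of_notMem hxm]
          have : (lw w).count x = 0 := by
            rw [List.count_eq_zero]
            intro h
            obtain ⟨a, rfl⟩ := hmem x h
            apply hxm
            simp only [g, Finset.mem_Icc]; omega
          omega
      obtain ⟨k1, k2, k3⟩ := hnd f hval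
      refine ⟨[f], (hT _).2 ⟨?_, by simpa using hval⟩, by simp [wd, hf]⟩
      have : Good 0 f := by
        rw [← good_iff 0 f k1 (by rw [k3]; omega), hf, k2, ← hdes, h3]
      simpa using this
    · rintro ⟨fs, hfs, rfl⟩
      obtain ⟨f, rfl, hgood, hval⟩ := hTf fs hfs
      obtain ⟨k1, k2, k3⟩ := hnd f hval
      have hlen : (word f).length = 2 * n := by
        rw [← k2]
        exact length_word f
      have hw : ∃ w, lw w = word f := by
        have hb : ∀ i : Fin (2 * n), 1 ≤ (word f)[i.1]'(by omega) ∧ (word f)[i.1]'(by omega) ≤ n :=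
          fun i => (k3 _).1 ((mem_word _ _).1 (List.getElem_mem _))
        refine ⟨fun i => ⟨(word f)[i.1]'(by omega) - 1, by have := hb i; omega⟩, ?_⟩
        refine List.ext_getElem (by simp [lw, hlen]) fun i h1 h2 => ?_
        have := (hb ⟨i, by omega⟩).1
        simp only [lw, g, List.getElem_map, List.getElem_ofFn]
        simp only at this
        omega
      obtain ⟨w, hw⟩ := hw
      refine ⟨w, ⟨⟨?_, ?_⟩, ?_⟩, by simp [wd, hw]⟩
      · intro a
        rw [hcnt, hw, count_word, List.count_eq_one_of_mem k1]
        rw [k3]; simp only [g]; omega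
      · rw [← hnc, hw]; exact NC_word f k1
      · rw [hdes, hw, ← k2]
        exact (good_iff 0 f k1 (by rw [k3]; omega)).2 hgood
  have h1 := Finset.card_image_of_injective ((quasiStirlingSet n).filter fun w => desW w = n) hlw
  rw [← h1, himg, Finset.card_image_of_injOn]
  intro fs h fs' h' he
  obtain ⟨f, rfl, hgood, hval⟩ := hTf fs h
  obtain ⟨f', rfl, hgood', hval'⟩ := hTf fs' h'
  have : f = f' := word_inj f f' (hnd f hval).1 (hnd f' hval').1 (by simpa [wd] using he)
  rw [this]
end

section
/- For every n ≥ 1 and every m ≥ 0, the number of quasi-Stirling permutations w of size n with des(w) = m+1 equals the number of injective functions f from {1,…,n−1} to {1,…,2n} with exactly m excedances (that is, Q̄_n(t) = t·J_{2n,n+1}(t)). -/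
open Finset
open scoped Classical

/-- Number of excedances of a function `f` from `{1, …, s}` to `{1, …, n}`
(0-indexed encoding): positions `i` with `f i > i`. -/
noncomputable def excCount {s n : ℕ} (f : Fin s → Fin n) : ℕ :=
  (univ.filter fun i : Fin s => (i : ℕ) < (f i : ℕ)).card

open Polynomial in
/-- generating polynomial of injections by excedances -/
noncomputable def injPoly (s M : ℕ) : Polynomial ℚ :=
  ∑ f ∈ univ.filter (fun f : Fin s → Fin M => Function.Injective f), (X : Polynomial ℚ) ^ excCount f

/-- insertion of a new smallest element -/
noncomputable def insInj {s M : ℕ} (f : Fin s → Fin M) (y : Fin (M + 1)) : Fin (s + 1) → Fin (M + 1) :=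
  fun i => Equiv.swap 0 y (Fin.cons (α := fun _ => Fin (M + 1)) 0 (fun i => (f i).succ) i)

theorem insInj_zero {s M : ℕ} (f : Fin s → Fin M) (y : Fin (M + 1)) : insInj f y 0 = y := by
  simp [insInj]

theorem insInj_succ {s M : ℕ} (f : Fin s → Fin M) (y : Fin (M + 1)) (i : Fin s) :
    insInj f y i.succ = if (f i).succ = y then 0 else (f i).succ := by
  simp [insInj, Equiv.swap_apply_def]

theorem excCount_eq_sum {s M : ℕ} (f : Fin s → Fin M) :
    excCount f = ∑ i : Fin s, if (i : ℕ) < (f i : ℕ) then 1 else 0 := by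
  simp [excCount]

theorem excCount_ins {s M : ℕ} (f : Fin s → Fin M) (hf : Function.Injective f) (y : Fin (M + 1)) :
    excCount (insInj f y) = if y = 0 ∨ (∃ i : Fin s, (i : ℕ) < (f i : ℕ) ∧ (f i).succ = y)
      then excCount f else excCount f + 1 := by
  rw [excCount_eq_sum, Fin.sum_univ_succ, insInj_zero]
  simp only [insInj_succ]
  by_cases hy : y = 0
  · subst hy
    simp [excCount_eq_sum, Fin.succ_ne_zero]
  have hy0 : 0 < (y : ℕ) := by
    rcases Nat.eq_zero_or_pos (y : ℕ) with h | h
    · exact absurd (Fin.ext h) hy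
    · exact h
  have hk : (if ((0 : Fin (s + 1)) : ℕ) < (y : ℕ) then 1 else 0) = 1 := by simp [hy0]
  rw [hk]
  by_cases h : ∃ i : Fin s, (f i).succ = y
  · obtain ⟨i, hi⟩ := h
    have e1 : ∀ j : Fin s, (f j).succ = y ↔ j = i := by
      intro j
      rw [← hi, Fin.succ_inj]
      exact hf.eq_iff
    simp only [e1]
    rw [excCount_eq_sum, ← Finset.add_sum_erase _ _ (Finset.mem_univ i),
      ← Finset.add_sum_erase univ (fun i : Fin s => if (i : ℕ) < (f i : ℕ) then 1 else 0) (Finset.mem_univ i)]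
    have e2 : ∑ x ∈ univ.erase i, (if ((x.succ : Fin (s+1)) : ℕ) < ((if x = i then (0 : Fin (M+1)) else (f x).succ : Fin (M + 1)) : ℕ) then 1 else 0)
       = ∑ x ∈ univ.erase i, if (x : ℕ) < (f x : ℕ) then 1 else 0 := by
      apply Finset.sum_congr rfl
      intro x hx
      have := Finset.ne_of_mem_erase hx
      simp [this]
    rw [e2]
    by_cases h2 : (i : ℕ) < (f i : ℕ)
    · rw [if_pos (Or.inr ⟨i, h2, rfl⟩)]
      simp [h2]
    · have hn : ¬ (y = 0 ∨ ∃ j : Fin s, (j : ℕ) < (f j : ℕ) ∧ j = i) := by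
        rintro (h | ⟨j, hj, rfl⟩)
        · exact hy h
        · exact h2 hj
      rw [if_neg hn]
      simp [h2, add_comm]
  · rw [if_neg]
    · push Not at h
      simp [h, excCount_eq_sum, add_comm]
    · rintro (h1 | ⟨j, hj, hj2⟩)
      · exact hy h1
      · exact h ⟨j, hj2⟩

open Polynomial in
theorem sum_ins {s M : ℕ} (f : Fin s → Fin M) (hf : Function.Injective f) :
    ∑ y : Fin (M + 1), (X : Polynomial ℚ) ^ excCount (insInj f y)
      = ((excCount f : ℚ[X]) + 1) * X ^ excCount f + ((M : ℚ[X]) - (excCount f : ℚ[X])) * X ^ (excCount f + 1) := by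
  simp only [excCount_ins f hf]
  rw [Fin.sum_univ_succ]
  simp only [true_or, if_true, Fin.succ_ne_zero, false_or, Fin.succ_inj]
  have : ∀ v : Fin M, (X : Polynomial ℚ) ^ (if ∃ i : Fin s, (i : ℕ) < (f i : ℕ) ∧ f i = v then excCount f else excCount f + 1)
    = X ^ (excCount f + 1) + (if ∃ i : Fin s, (i : ℕ) < (f i : ℕ) ∧ f i = v then 1 else 0) * (X ^ excCount f - X ^ (excCount f + 1)) := by
    intro v
    split_ifs <;> ring
  simp only [this]
  rw [Finset.sum_add_distrib, ← Finset.sum_mul]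
  have h2 : (∑ v : Fin M, (if ∃ i : Fin s, (i : ℕ) < (f i : ℕ) ∧ f i = v then (1 : ℚ[X]) else 0)) = excCount f := by
    rw [Finset.sum_boole]
    congr 1
    rw [excCount, ← Finset.card_image_of_injective _ hf]
    congr 1
    ext v
    simp
  rw [h2]
  simp
  ring

open Polynomial in
theorem injPoly_succ (s M : ℕ) : injPoly (s + 1) (M + 1) =
    (1 - X) * (injPoly s M + X * derivative (injPoly s M)) + ((M : ℚ[X]) + 1) * X * injPoly s M := by
  have h1 : injPoly (s + 1) (M + 1) = ∑ f ∈ univ.filter (fun f : Fin s → Fin M => Function.Injective f),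
      ∑ y : Fin (M + 1), (X : Polynomial ℚ) ^ excCount (insInj f y) := by
    rw [← Finset.sum_product', injPoly]
    symm
    refine Finset.sum_bij (fun p _ => insInj p.1 p.2) ?_ ?_ ?_ ?_
    · rintro ⟨f, y⟩ h
      simp only [mem_product, mem_filter, mem_univ, true_and, and_true] at h ⊢
      refine (Equiv.swap 0 y).injective.comp ?_
      rw [Fin.cons_injective_iff]
      refine ⟨?_, (Fin.succ_injective _).comp h⟩
      rintro ⟨i, hi⟩
      exact Fin.succ_ne_zero _ hi
    · rintro ⟨f, y⟩ h ⟨f', y'⟩ h' e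
      simp only at e
      have ey : y = y' := by rw [← insInj_zero f y, e, insInj_zero]
      subst ey
      congr 1
      ext i
      have := congrFun e i.succ
      simp only [insInj] at this
      have := (Equiv.swap 0 y).injective this
      simp at this
      rw [this]
    · intro g hg
      simp only [mem_filter, mem_univ, true_and] at hg
      have hne : ∀ i : Fin s, Equiv.swap 0 (g 0) (g i.succ) ≠ 0 := by
        intro i h
        have : Equiv.swap 0 (g 0) (g i.succ) = Equiv.swap 0 (g 0) (g 0) := by rw [h]; simp
        exact Fin.succ_ne_zero i (hg ((Equiv.swap 0 (g 0)).injective this))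
      refine ⟨(fun i => (Equiv.swap 0 (g 0) (g i.succ)).pred (hne i), g 0), ?_, ?_⟩
      · simp only [mem_product, mem_filter, mem_univ, true_and, and_true]
        intro i j hij
        simp only [Fin.pred_inj] at hij
        exact Fin.succ_injective _ (hg ((Equiv.swap 0 (g 0)).injective hij))
      · funext i
        refine Fin.cases ?_ (fun i => ?_) i
        · simp [insInj]
        · simp [insInj]
    · intros; rfl
  rw [h1]
  rw [Finset.sum_congr rfl (fun f hf => sum_ins f (by simpa using hf))]
  simp only [injPoly, derivative_sum, Finset.mul_sum, ← Finset.sum_add_distrib]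
  refine Finset.sum_congr rfl fun f _ => ?_
  rw [derivative_X_pow]
  rcases excCount f with _ | k
  · simp; ring
  · simp; ring

theorem injPoly_zero (M : ℕ) : injPoly 0 M = 1 := by
  have : ∀ f : Fin 0 → Fin M, excCount f = 0 := fun f => by simp [excCount]
  simp [injPoly, this, Function.injective_of_subsingleton]

open Polynomial in
/-- The operator `X (1 - X) d/dX + 2 s X` acting on the coefficient of index `s`. -/
noncomputable def opL (f : PowerSeries ℚ[X]) : PowerSeries ℚ[X] :=
  PowerSeries.mk fun s => X * (1 - X) * derivative (PowerSeries.coeff s f)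
    + 2 * (s : ℚ[X]) * X * PowerSeries.coeff s f

open Polynomial in
theorem opL_mul (f g : PowerSeries ℚ[X]) : opL (f * g) = f * opL g + g * opL f := by
  rw [mul_comm g]
  ext1 s
  rw [map_add, PowerSeries.coeff_mul, PowerSeries.coeff_mul]
  simp only [opL, PowerSeries.coeff_mk]
  rw [PowerSeries.coeff_mul, derivative_sum, Finset.mul_sum, Finset.mul_sum,
    ← Finset.sum_add_distrib, ← Finset.sum_add_distrib]
  refine Finset.sum_congr rfl fun p hp => ?_
  rw [← Finset.HasAntidiagonal.mem_antidiagonal.1 hp, derivative_mul]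
  push_cast
  ring

open Polynomial in
theorem opL_one : opL 1 = 0 := by
  ext1 s
  simp only [opL, PowerSeries.coeff_mk, PowerSeries.coeff_one]
  split_ifs with h
  · subst h; simp
  · simp

open Polynomial in
theorem opL_pow (f : PowerSeries ℚ[X]) (p : ℕ) :
    opL (f ^ (p + 1)) = ((p : PowerSeries ℚ[X]) + 1) * f ^ p * opL f := by
  induction p with
  | zero => simp
  | succ p ih =>
    rw [pow_succ, opL_mul, ih]
    push_cast
    ring

theorem der_pow {R : Type*} [CommRing R] (f : PowerSeries R) (p : ℕ) :
    PowerSeries.derivative R (f ^ (p + 1))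
      = ((p : PowerSeries R) + 1) * f ^ p * PowerSeries.derivative R f := by
  rw [Derivation.leibniz_pow]
  simp only [nsmul_eq_mul, smul_eq_mul, Nat.add_sub_cancel]
  push_cast
  ring

open Polynomial in
theorem master (q : ℕ → ℚ[X]) (h0 : q 0 = 1)
    (hrec : ∀ n, q (n + 1) = ∑ j ∈ range (n + 1), (n.choose j : ℚ[X]) * (q j *
      (X * (1 - X) * derivative (q (n - j)) + (2 * ((n - j : ℕ) : ℚ[X]) + 1) * X * q (n - j))))
    (n : ℕ) : q (n + 1) = X * injPoly n (2 * (n + 1)) := by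
  set Q : PowerSeries ℚ[X] := PowerSeries.mk fun s => C ((s.factorial : ℚ)⁻¹) * q s with hQ
  have hode : PowerSeries.derivative ℚ[X] Q = Q * (opL Q + PowerSeries.C X * Q) := by
    ext1 s
    rw [PowerSeries.coeff_derivative, PowerSeries.coeff_mul, hQ, PowerSeries.coeff_mk, hrec,
      Finset.Nat.sum_antidiagonal_eq_sum_range_succ_mk, Finset.mul_sum, Finset.sum_mul]
    refine Finset.sum_congr rfl fun j hj => ?_
    have hjs : j ≤ s := Nat.lt_succ_iff.1 (Finset.mem_range.1 hj)
    simp only [map_add, PowerSeries.coeff_C_mul, opL, PowerSeries.coeff_mk, derivative_C_mul]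
    have hc : C (((s + 1).factorial : ℚ)⁻¹) * ((s : ℚ[X]) + 1) * (s.choose j : ℚ[X])
        = C ((j.factorial : ℚ)⁻¹) * C (((s - j).factorial : ℚ)⁻¹) := by
      rw [← C_eq_natCast s, ← C_eq_natCast (s.choose j), ← C_1, ← C_add, ← C_mul, ← C_mul, ← C_mul]
      congr 1
      rw [Nat.cast_choose ℚ hjs, Nat.factorial_succ]
      have := Nat.factorial_ne_zero s
      have h2 := Nat.factorial_ne_zero j
      have h3 := Nat.factorial_ne_zero (s - j)
      push_cast
      have h4 : (s : ℚ) + 1 ≠ 0 := by positivity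
      field_simp
    linear_combination (q j *
      (X * (1 - X) * derivative (q (s - j)) + (2 * ((s - j : ℕ) : ℚ[X]) + 1) * X * q (s - j))) * hc
  have hpow : ∀ p : ℕ, ((p : PowerSeries ℚ[X]) + 1) * PowerSeries.derivative ℚ[X] (Q ^ p)
      = (p : PowerSeries ℚ[X]) * (opL (Q ^ (p + 1)) + ((p : PowerSeries ℚ[X]) + 1) * PowerSeries.C X * Q ^ (p + 1)) := by
    intro p
    rw [opL_pow]
    rcases p with _ | p
    · rw [pow_zero, PowerSeries.derivative_one]; simp
    · rw [der_pow, hode]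
      push_cast
      ring
  -- c p s = s! [z^s] Q^p
  set c : ℕ → ℕ → ℚ[X] := fun p s => C (s.factorial : ℚ) * PowerSeries.coeff s (Q ^ p) with hcdef
  have hc0 : ∀ p, c p 0 = 1 := by
    intro p
    simp only [hcdef, PowerSeries.coeff_zero_eq_constantCoeff, map_pow]
    rw [← PowerSeries.coeff_zero_eq_constantCoeff_apply, hQ, PowerSeries.coeff_mk, h0]
    simp
  have hcs : ∀ p s : ℕ, ((p : ℚ[X]) + 1) * c p (s + 1) = (p : ℚ[X]) * (X * (1 - X) * derivative (c (p + 1) s)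
      + (2 * (s : ℚ[X]) + (p : ℚ[X]) + 1) * X * c (p + 1) s) := by
    intro p s
    have h := congrArg (PowerSeries.coeff s) (hpow p)
    have e1 : ((p : PowerSeries ℚ[X]) + 1) = PowerSeries.C ((p : ℚ[X]) + 1) := by simp
    have e2 : (p : PowerSeries ℚ[X]) = PowerSeries.C (p : ℚ[X]) := by simp
    rw [e1, e2, ← map_mul PowerSeries.C, PowerSeries.coeff_C_mul, PowerSeries.coeff_C_mul, map_add,
      PowerSeries.coeff_C_mul, PowerSeries.coeff_derivative] at h
    simp only [opL, PowerSeries.coeff_mk] at h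
    simp only [hcdef, derivative_C_mul]
    have e3 : C ((s + 1).factorial : ℚ) = (C (s.factorial : ℚ)) * ((s : ℚ[X]) + 1) := by
      rw [Nat.factorial_succ]; push_cast; simp; ring
    rw [e3]
    linear_combination (C (s.factorial : ℚ)) * h
  have key : ∀ s, s ≤ n → c (n + 1 - s) (s + 1) = ((n + 1 - s : ℕ) : ℚ[X]) * (X * injPoly s (n + 2 + s)) := by
    intro s
    induction s with
    | zero =>
      intro _
      have h := hcs (n + 1) 0
      rw [hc0, injPoly_zero] at *
      have hne : ((n + 1 : ℕ) : ℚ[X]) + 1 ≠ 0 := by exact_mod_cast Nat.succ_ne_zero (n + 1)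
      apply mul_left_cancel₀ hne
      simp only [Nat.sub_zero, zero_add] at *
      rw [h]
      simp
      ring
    | succ s ih =>
      intro hs
      have ih := ih (by omega)
      obtain ⟨d, rfl⟩ : ∃ d, n = s + 1 + d := ⟨n - (s + 1), by omega⟩
      have e1 : s + 1 + d + 1 - s = d + 2 := by omega
      have e2 : s + 1 + d + 1 - (s + 1) = d + 1 := by omega
      rw [e1] at ih
      rw [e2]
      have h := hcs (d + 1) (s + 1)
      rw [ih] at h
      have hne : ((d + 1 : ℕ) : ℚ[X]) + 1 ≠ 0 := by exact_mod_cast Nat.succ_ne_zero (d + 1)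
      apply mul_left_cancel₀ hne
      rw [h, show s + 1 + d + 2 + (s + 1) = (s + 1 + d + 2 + s) + 1 by ring, injPoly_succ]
      rw [derivative_mul, derivative_mul, derivative_natCast, derivative_X]
      push_cast
      ring
  have h := key n le_rfl
  have e : n + 1 - n = 1 := by omega
  rw [e] at h
  simp only [hcdef, pow_one] at h
  rw [hQ, PowerSeries.coeff_mk, ← mul_assoc, ← C_mul, mul_inv_cancel₀ (by exact_mod_cast Nat.factorial_ne_zero _)] at h
  rw [show 2 * (n + 1) = n + 2 + n by ring]
  simpa using h

/-- Descents of a word given as a list; the last position counts as a descent. -/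
def desL : List ℕ → ℕ
  | [] => 0
  | [_] => 1
  | a :: b :: l => (if b < a then 1 else 0) + desL (b :: l)

theorem desL_append (A : List ℕ) (y : ℕ) (l : List ℕ) :
    desL (A ++ y :: l) + 1 = desL (A ++ [y]) + desL (y :: l) := by
  induction A with
  | nil => simp [desL]; omega
  | cons a A ih =>
    cases A with
    | nil => simp only [List.cons_append, List.nil_append, desL]; omega
    | cons b A =>
      simp only [List.cons_append, desL] at *
      omega

theorem desL_mid (x : ℕ) (C : List ℕ) (B : List ℕ) : ∀ b : ℕ, x < b → (∀ y ∈ B, x < y) →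
    desL (b :: (B ++ x :: C)) = desL (b :: B) + desL (x :: C) := by
  induction B with
  | nil => intro b hb _; simp [desL, hb]
  | cons c B ih =>
    intro b hb hB
    simp only [List.cons_append, desL]
    rw [ih c (hB c (by simp)) (fun y hy => hB y (by simp [hy]))]
    omega

theorem desL_sandwich (x : ℕ) (A B C : List ℕ) (hB : ∀ y ∈ B, x < y) :
    desL (A ++ x :: (B ++ x :: C)) = desL B + desL (A ++ x :: C) := by
  have h1 := desL_append A x (B ++ x :: C)
  have h2 := desL_append A x C
  have h3 : desL (x :: (B ++ x :: C)) = desL B + desL (x :: C) := by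
    cases B with
    | nil => simp [desL]
    | cons b B =>
      have hb : x < b := hB b (by simp)
      simp only [List.cons_append, desL]
      rw [desL_mid x C B b hb (fun y hy => hB y (by simp [hy]))]
      simp [hb.le]
  omega

open Polynomial in
theorem sum_insert_aux (x : ℕ) (v : List ℕ) : ∀ a, x < a → (∀ y ∈ v, x < y) →
    ∑ p ∈ range (v.length + 1), (X : ℚ[X]) ^ desL (a :: (v.take p ++ x :: v.drop p))
      = ((desL (a :: v) : ℚ[X]) - 1) * X ^ desL (a :: v)
        + ((v.length : ℚ[X]) + 2 - (desL (a :: v) : ℚ[X])) * X ^ (desL (a :: v) + 1) := by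
  induction v with
  | nil =>
    intro a ha _
    simp [desL, ha]
    ring
  | cons b v ih =>
    intro a ha hv
    have hb : x < b := hv b (by simp)
    have ih := ih b hb (fun y hy => hv y (by simp [hy]))
    rw [List.length_cons, Finset.sum_range_succ']
    simp only [List.take_succ_cons, List.drop_succ_cons, List.cons_append, List.take_zero,
      List.drop_zero, List.nil_append, desL, ha, not_lt.2 hb.le, if_true, if_false]
    simp only [pow_add _ (if b < a then 1 else 0)]
    rw [← Finset.mul_sum, ih]
    split_ifs
    · push_cast; ring
    · push_cast; ring

open Polynomial in
theorem sum_insert (x : ℕ) (v : List ℕ) (hv : ∀ y ∈ v, x < y) :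
    ∑ p ∈ range (v.length + 1), (X : ℚ[X]) ^ desL (v.take p ++ x :: v.drop p)
      = (desL v : ℚ[X]) * X ^ desL v
        + ((v.length : ℚ[X]) + 1 - (desL v : ℚ[X])) * X ^ (desL v + 1) := by
  cases v with
  | nil => simp [desL]
  | cons a v =>
    have ha : x < a := hv a (by simp)
    rw [List.length_cons, Finset.sum_range_succ']
    simp only [List.take_succ_cons, List.drop_succ_cons, List.cons_append, List.take_zero,
      List.drop_zero, List.nil_append]
    rw [sum_insert_aux x v a ha (fun y hy => hv y (by simp [hy]))]
    simp only [desL, not_lt.2 ha.le, if_false]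
    push_cast
    ring

/-- No crossing pattern `a b a b`. -/
def NonCross (l : List ℕ) : Prop := ∀ a b, a ≠ b → ¬ List.Sublist [a, b, a, b] l

theorem NonCross.sub {l l' : List ℕ} (h : NonCross l) (hs : List.Sublist l' l) : NonCross l' :=
  fun a b hab h' => h a b hab (h'.trans hs)

theorem sub_front {a : ℕ} {l A D : List ℕ} (ha : a ∉ A) (h : List.Sublist (a :: l) (A ++ D)) :
    List.Sublist (a :: l) D := by
  induction A with
  | nil => simpa using h
  | cons y A ih =>
    simp only [List.mem_cons, not_or] at ha
    rw [List.cons_append] at h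
    cases h with
    | cons _ h => exact ih ha.2 h
    | cons_cons _ h => exact absurd rfl ha.1

theorem sub_mid {a b : ℕ} {A B C : List ℕ} (hA : a ∉ A) (hC : a ∉ C)
    (h : List.Sublist [a, b, a] (A ++ (B ++ C))) : b ∈ B := by
  have h1 := sub_front hA h
  have h2 : List.Sublist (a :: [b, a]) (C.reverse ++ B.reverse) := by
    have := h1.reverse
    simpa using this
  have h3 := sub_front (by simpa using hC) h2
  have : b ∈ B.reverse := h3.subset (by simp)
  simpa using this

theorem nonCross_split {x : ℕ} {A B C : List ℕ} (hA : x ∉ A) (hB : x ∉ B) (hC : x ∉ C) :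
    NonCross (A ++ x :: (B ++ x :: C)) ↔
      NonCross B ∧ NonCross (A ++ C) ∧ ∀ y ∈ B, y ∉ A ++ C := by
  constructor
  · intro h
    refine ⟨h.sub ?_, h.sub ?_, ?_⟩
    · exact ((List.sublist_append_left B _).trans (List.sublist_cons_self x _)).trans
        (List.sublist_append_right A _)
    · refine List.Sublist.append_left ?_ A
      exact ((List.sublist_cons_self x C).trans (List.sublist_append_right B _)).trans
        (List.sublist_cons_self x _)
    · intro y hy hAC
      have hyx : y ≠ x := fun e => hB (e ▸ hy)
      rw [List.mem_append] at hAC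
      have sB : List.Sublist [y] B := List.singleton_sublist.2 hy
      rcases hAC with hyA | hyC
      · refine h y x hyx ?_
        have sA : List.Sublist [y] A := List.singleton_sublist.2 hyA
        exact sA.append (List.Sublist.cons_cons x (sB.append (List.Sublist.cons_cons x (List.nil_sublist C))))
      · refine h x y hyx.symm ?_
        have sC : List.Sublist [y] C := List.singleton_sublist.2 hyC
        exact (List.nil_sublist A).append (List.Sublist.cons_cons x (sB.append (List.Sublist.cons_cons x sC)))
  · rintro ⟨h1, h2, h3⟩ a b hab h
    have haba : List.Sublist [a, b, a] (A ++ x :: (B ++ x :: C)) :=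
      List.Sublist.trans (by simp) h
    have hbab : List.Sublist [b, a, b] (A ++ x :: (B ++ x :: C)) :=
      List.Sublist.trans (by simp) h
    -- general fact
    have G1 : ∀ c d, c ∈ B → List.Sublist [c, d, c] (A ++ x :: (B ++ x :: C)) → d ∈ B := by
      intro c d hc hs
      have hcx : c ≠ x := fun e => hB (e ▸ hc)
      have hAC := h3 c hc
      rw [List.mem_append, not_or] at hAC
      refine sub_mid (A := A ++ [x]) (C := x :: C) (a := c) ?_ ?_ (by simpa using hs)
      · simp [hAC.1, hcx]
      · simp [hAC.2, hcx]
    have G2 : ∀ d, d ≠ x → List.Sublist [x, d, x] (A ++ x :: (B ++ x :: C)) → d ∈ B := by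
      intro d hd hs
      have : d ∈ x :: (B ++ [x]) := sub_mid (A := A) (C := C) (a := x) hA hC (by simpa using hs)
      simpa [hd] using this
    by_cases haB : a ∈ B
    · have hbB := G1 a b haB haba
      refine h1 a b hab ?_
      have := h.filter (fun y => decide (y ∈ B))
      have eA : A.filter (fun y => decide (y ∈ B)) = [] := by
        rw [List.filter_eq_nil_iff]
        intro y hy hyB
        exact h3 y (by simpa using hyB) (by simp [hy])
      have eC : C.filter (fun y => decide (y ∈ B)) = [] := by
        rw [List.filter_eq_nil_iff]
        intro y hy hyB
        exact h3 y (by simpa using hyB) (by simp [hy])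
      have eB : B.filter (fun y => decide (y ∈ B)) = B := by
        rw [List.filter_eq_self]
        intro y hy
        simpa using hy
      simp only [List.filter_append, List.filter_cons, eA, eB, eC] at this
      simpa [haB, hbB, hB] using this
    · have hbB : b ∉ B := fun hb => haB (G1 b a hb hbab)
      have hax : a ≠ x := by
        rintro rfl
        exact hbB (G2 b hab.symm haba)
      have hbx : b ≠ x := by
        rintro rfl
        exact haB (G2 a hab hbab)
      refine h2 a b hab ?_
      have := h.filter (fun y => decide (y ∉ B ∧ y ≠ x))
      have eB : B.filter (fun y => decide (y ∉ B ∧ y ≠ x)) = [] := by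
        rw [List.filter_eq_nil_iff]
        intro y hy
        simp [hy]
      have eAC : ∀ D : List ℕ, (∀ y ∈ D, y ∈ A ++ C) → D.filter (fun y => decide (y ∉ B ∧ y ≠ x)) = D := by
        intro D hD
        rw [List.filter_eq_self]
        intro y hy
        have hy' := hD y hy
        have : y ≠ x := by
          rintro rfl
          rw [List.mem_append] at hy'
          exact hy'.elim hA hC
        simp only [decide_eq_true_eq]
        exact ⟨fun hb => h3 y hb hy', this⟩
      simp only [List.filter_append, List.filter_cons, eB, eAC A (fun y hy => by simp [hy]),
        eAC C (fun y hy => by simp [hy])] at this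
      simpa [haB, hbB, hax, hbx] using this

/-- Quasi-Stirling words on the set of letters `S`. -/
noncomputable def QS (S : Finset ℕ) : Finset (List ℕ) :=
  (Multiset.lists (S.val + S.val)).toFinset.filter NonCross

theorem mem_QS {S : Finset ℕ} {l : List ℕ} :
    l ∈ QS S ↔ (∀ a, l.count a = if a ∈ S then 2 else 0) ∧ NonCross l := by
  rw [QS, Finset.mem_filter, Multiset.mem_toFinset, Multiset.mem_lists_iff]
  refine and_congr_left fun _ => ?_
  change S.val + S.val = (l : Multiset ℕ) ↔ _
  rw [Multiset.ext]
  refine forall_congr' fun a => ?_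
  rw [Multiset.count_add, Multiset.coe_count,
    Multiset.count_eq_of_nodup S.nodup]
  simp only [Finset.mem_val]
  split_ifs <;> omega

theorem QS_length {S : Finset ℕ} {l : List ℕ} (h : l ∈ QS S) : l.length = 2 * S.card := by
  rw [QS, Finset.mem_filter, Multiset.mem_toFinset, Multiset.mem_lists_iff] at h
  have := congrArg Multiset.card h.1
  simp at this
  omega

theorem QS_mem {S : Finset ℕ} {l : List ℕ} (h : l ∈ QS S) (a : ℕ) : a ∈ l ↔ a ∈ S := by
  have := (mem_QS.1 h).1 a
  rw [← List.count_pos_iff, this]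
  split_ifs with h <;> simp [h]

theorem QS_split {S : Finset ℕ} {x : ℕ} (hx : x ∈ S) {A B C : List ℕ}
    (hA : x ∉ A) (hB : x ∉ B) (hC : x ∉ C) :
    A ++ x :: (B ++ x :: C) ∈ QS S ↔
      ∃ T ∈ (S.erase x).powerset, B ∈ QS T ∧ A ++ C ∈ QS (S.erase x \ T) := by
  constructor
  · intro h
    obtain ⟨h1, h2⟩ := mem_QS.1 h
    obtain ⟨n1, n2, n3⟩ := (nonCross_split hA hB hC).1 h2
    have hS := QS_mem h
    simp only [List.count_append, List.count_cons, beq_iff_eq] at h1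
    refine ⟨B.toFinset, ?_, mem_QS.2 ⟨?_, n1⟩, mem_QS.2 ⟨?_, n2⟩⟩
    · rw [Finset.mem_powerset]
      intro y hy
      rw [List.mem_toFinset] at hy
      rw [Finset.mem_erase]
      exact ⟨fun e => hB (e ▸ hy), (hS y).1 (by simp [hy])⟩
    · intro a
      simp only [List.mem_toFinset]
      split_ifs with ha
      · have h3 := n3 a ha
        have hax : a ≠ x := fun e => hB (e ▸ ha)
        have := h1 a
        rw [List.mem_append, not_or] at h3
        rw [List.count_eq_zero_of_not_mem h3.1, List.count_eq_zero_of_not_mem h3.2,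
          if_pos ((hS a).1 (by simp [ha])), if_neg hax.symm] at this
        omega
      · exact List.count_eq_zero_of_not_mem ha
    · intro a
      simp only [Finset.mem_sdiff, List.mem_toFinset, Finset.mem_erase]
      by_cases hax : a = x
      · subst hax
        simp [List.count_eq_zero_of_not_mem, hA, hC]
      · by_cases ha : a ∈ B
        · rw [List.count_eq_zero_of_not_mem (n3 a ha), if_neg (by tauto)]
        · have := h1 a
          rw [List.count_eq_zero_of_not_mem ha, if_neg (Ne.symm hax)] at this
          rw [List.count_append]
          simp only [ha, hax, ne_eq, not_false_eq_true, true_and, and_true]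
          omega
  · rintro ⟨T, hT, hBT, hAC⟩
    rw [Finset.mem_powerset] at hT
    refine mem_QS.2 ⟨?_, (nonCross_split hA hB hC).2 ⟨(mem_QS.1 hBT).2, (mem_QS.1 hAC).2, ?_⟩⟩
    · intro a
      have c1 := (mem_QS.1 hBT).1 a
      have c2 := (mem_QS.1 hAC).1 a
      simp only [Finset.mem_sdiff, Finset.mem_erase] at c2
      rw [List.count_append] at c2
      simp only [List.count_append, List.count_cons, beq_iff_eq]
      by_cases hax : a = x
      · subst hax
        rw [List.count_eq_zero_of_not_mem hA, List.count_eq_zero_of_not_mem hB,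
          List.count_eq_zero_of_not_mem hC]
        simp [hx]
      · rw [if_neg (Ne.symm hax)]
        by_cases haT : a ∈ T
        · have haS : a ∈ S := Finset.mem_of_mem_erase (hT haT)
          simp only [haT, haS, not_true_eq_false, and_false, if_true, if_false] at *
          omega
        · simp only [haT, hax, ne_eq, not_false_eq_true, true_and, and_true, if_false] at *
          omega
    · intro y hy hy2
      have h1 := (QS_mem hBT y).1 hy
      have h2 := (QS_mem hAC y).1 hy2
      exact (Finset.mem_sdiff.1 h2).2 h1

theorem QS_exists_split {S : Finset ℕ} {x : ℕ} (hx : x ∈ S) {w : List ℕ} (hw : w ∈ QS S) :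
    ∃ A B C, x ∉ A ∧ x ∉ B ∧ x ∉ C ∧ w = A ++ x :: (B ++ x :: C) := by
  have hc := (mem_QS.1 hw).1 x
  rw [if_pos hx] at hc
  obtain ⟨A, D, rfl, hA⟩ := List.eq_append_cons_of_mem ((QS_mem hw x).2 hx)
  have hD : D.count x = 1 := by
    rw [List.count_append, List.count_cons_self, List.count_eq_zero_of_not_mem hA] at hc
    omega
  obtain ⟨B, C, rfl, hB⟩ := List.eq_append_cons_of_mem (List.count_pos_iff.1 (by omega : 0 < D.count x))
  refine ⟨A, B, C, hA, hB, ?_, rfl⟩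
  rw [List.count_append, List.count_cons_self, List.count_eq_zero_of_not_mem hB] at hD
  rw [← List.count_eq_zero]
  omega

open Polynomial in
/-- Descent polynomial of quasi-Stirling words on the letters `S`. -/
noncomputable def qsPoly (S : Finset ℕ) : ℚ[X] := ∑ w ∈ QS S, X ^ desL w

open Polynomial in
theorem qsPoly_rec_aux {S : Finset ℕ} {x : ℕ} (hx : x ∈ S) :
    qsPoly S = ∑ T ∈ (S.erase x).powerset, ∑ B ∈ QS T, ∑ v ∈ QS (S.erase x \ T),
      ∑ p ∈ range (v.length + 1), X ^ desL (v.take p ++ x :: (B ++ x :: v.drop p)) := by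
  have key : ∀ T ∈ (S.erase x).powerset, ∀ B ∈ QS T, ∀ v ∈ QS (S.erase x \ T), x ∉ B ∧ x ∉ v := by
    intro T hT B hB v hv
    rw [Finset.mem_powerset] at hT
    rw [QS_mem hB, QS_mem hv]
    refine ⟨fun h => ?_, fun h => ?_⟩
    · simpa using hT h
    · simp at h
  simp only [Finset.sum_sigma']
  rw [qsPoly]
  symm
  refine Finset.sum_bij (fun z _ => z.2.2.1.take z.2.2.2 ++ x :: (z.2.1 ++ x :: z.2.2.1.drop z.2.2.2)) ?_ ?_ ?_ ?_
  · rintro ⟨T, B, v, p⟩ hz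
    simp only [Finset.mem_sigma] at hz
    obtain ⟨hT, hB, hv, hp⟩ := hz
    obtain ⟨xB, xv⟩ := key T hT B hB v hv
    refine (QS_split hx (fun h => xv (List.mem_of_mem_take h)) xB
      (fun h => xv (List.mem_of_mem_drop h))).2 ⟨T, hT, hB, ?_⟩
    rwa [List.take_append_drop]
  · rintro ⟨T, B, v, p⟩ hz ⟨T', B', v', p'⟩ hz' e
    simp only [Finset.mem_sigma] at hz hz'
    obtain ⟨hT, hB, hv, hp⟩ := hz
    obtain ⟨hT', hB', hv', hp'⟩ := hz'
    obtain ⟨xB, xv⟩ := key T hT B hB v hv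
    obtain ⟨xB', xv'⟩ := key T' hT' B' hB' v' hv'
    simp only at e
    have xt : x ∉ v.take p := fun h => xv (List.mem_of_mem_take h)
    have xt' : x ∉ v'.take p' := fun h => xv' (List.mem_of_mem_take h)
    have xd : x ∉ v.drop p := fun h => xv (List.mem_of_mem_drop h)
    have xd' : x ∉ v'.drop p' := fun h => xv' (List.mem_of_mem_drop h)
    have inj : ∀ A A' D D' : List ℕ, x ∉ A → x ∉ A' → A ++ x :: D = A' ++ x :: D' → A = A' ∧ D = D' := by
      intro A
      induction A with
      | nil =>
        intro A' D D' _ h2 h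
        cases A' with
        | nil => simpa using h
        | cons b A' =>
          simp only [List.nil_append, List.cons_append, List.cons.injEq] at h
          simp [h.1] at h2
      | cons a A ih =>
        intro A' D D' h1 h2 h
        cases A' with
        | nil =>
          simp only [List.nil_append, List.cons_append, List.cons.injEq] at h
          simp [h.1] at h1
        | cons b A' =>
          simp only [List.cons_append, List.cons.injEq] at h
          simp only [List.mem_cons, not_or] at h1 h2
          obtain ⟨r1, r2⟩ := ih A' D D' h1.2 h2.2 h.2
          exact ⟨by rw [h.1, r1], r2⟩
    obtain ⟨e1, e2⟩ := inj _ _ _ _ xt xt' e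
    obtain ⟨e3, e4⟩ := inj _ _ _ _ xB xB' e2
    subst e3
    have ev : v = v' := by rw [← List.take_append_drop p v, e1, e4, List.take_append_drop]
    subst ev
    have eT : T = T' := by
      ext a
      rw [← QS_mem hB, ← QS_mem hB']
    subst eT
    have ep : p = p' := by
      have := congrArg List.length e1
      rw [List.length_take, List.length_take] at this
      rw [Finset.mem_range] at hp hp'
      omega
    subst ep
    rfl
  · intro w hw
    obtain ⟨A, B, C, hA, hB, hC, rfl⟩ := QS_exists_split hx hw
    obtain ⟨T, hT, hBT, hAC⟩ := (QS_split hx hA hB hC).1 hw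
    refine ⟨⟨T, B, A ++ C, A.length⟩, ?_, ?_⟩
    · simp only [Finset.mem_sigma]
      refine ⟨hT, hBT, hAC, ?_⟩
      simp
    · simp
  · intros; rfl

open Polynomial in
theorem qsPoly_rec {S : Finset ℕ} {x : ℕ} (hx : x ∈ S) (hmin : ∀ y ∈ S.erase x, x < y) :
    qsPoly S = ∑ T ∈ (S.erase x).powerset, qsPoly T *
      (X * (1 - X) * derivative (qsPoly (S.erase x \ T))
        + (2 * ((S.erase x \ T).card : ℚ[X]) + 1) * X * qsPoly (S.erase x \ T)) := by
  rw [qsPoly_rec_aux hx]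
  refine Finset.sum_congr rfl fun T hT => ?_
  rw [Finset.mem_powerset] at hT
  rw [qsPoly, Finset.sum_mul]
  refine Finset.sum_congr rfl fun B hB => ?_
  rw [qsPoly, derivative_sum, Finset.mul_sum, Finset.mul_sum, ← Finset.sum_add_distrib, Finset.mul_sum]
  refine Finset.sum_congr rfl fun v hv => ?_
  have hB' : ∀ y ∈ B, x < y := fun y hy => hmin y (hT ((QS_mem hB y).1 hy))
  have hv' : ∀ y ∈ v, x < y := fun y hy => hmin y (Finset.mem_sdiff.1 ((QS_mem hv y).1 hy)).1
  simp only [desL_sandwich x _ B _ hB', pow_add _ (desL B)]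
  rw [← Finset.mul_sum, sum_insert x v hv', QS_length hv, derivative_X_pow]
  congr 1
  push_cast
  rcases desL v with _ | k
  · simp
  · simp; ring

open Polynomial in
theorem qsPoly_empty : qsPoly ∅ = 1 := by
  have : QS ∅ = {[]} := by
    ext l
    rw [Finset.mem_singleton]
    constructor
    · intro h
      have := QS_length h
      simpa using this
    · rintro rfl
      refine mem_QS.2 ⟨by simp, fun a b _ h => by simp at h⟩
  rw [qsPoly, this]
  simp [desL]

theorem qsPoly_card (k : ℕ) : ∀ S : Finset ℕ, S.card = k → qsPoly S = qsPoly (range k) := by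
  induction k using Nat.strong_induction_on with
  | _ k ih =>
    have expand : ∀ S : Finset ℕ, ∀ j, k = j + 1 → S.card = k → qsPoly S =
        ∑ T ∈ (range j).powerset, qsPoly (range T.card) *
      (Polynomial.X * (1 - Polynomial.X) * Polynomial.derivative (qsPoly (range (j - T.card)))
        + (2 * ((j - T.card : ℕ) : Polynomial ℚ) + 1) * Polynomial.X * qsPoly (range (j - T.card))) := by
      intro S j hk hS
      have hne : S.Nonempty := by
        rw [← Finset.card_pos]; omega
      have hx := S.min'_mem hne
      rw [qsPoly_rec hx (fun y hy => S.min'_lt_of_mem_erase_min' hne hy)]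
      have hc : (S.erase (S.min' hne)).card = j := by
        rw [Finset.card_erase_of_mem hx]; omega
      rw [Finset.sum_powerset_apply_card (fun t => qsPoly (range t) *
      (Polynomial.X * (1 - Polynomial.X) * Polynomial.derivative (qsPoly (range (j - t)))
        + (2 * ((j - t : ℕ) : Polynomial ℚ) + 1) * Polynomial.X * qsPoly (range (j - t)))), Finset.card_range,
        ← hc, ← Finset.sum_powerset_apply_card]
      refine Finset.sum_congr rfl fun T hT => ?_
      rw [Finset.mem_powerset] at hT
      have h1 : T.card ≤ (S.erase (S.min' hne)).card := Finset.card_le_card hT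
      have h2 := Finset.card_sdiff_of_subset hT
      rw [ih T.card (by omega) T rfl, ih _ (by omega) (S.erase (S.min' hne) \ T) rfl, h2]
    intro S hS
    rcases k with _ | j
    · rw [Finset.card_eq_zero.1 hS]; simp
    · rw [expand S j rfl hS, expand (range (j + 1)) j rfl (by simp)]

open Polynomial in
theorem qsPoly_range_rec (n : ℕ) : qsPoly (range (n + 1)) =
    ∑ j ∈ range (n + 1), (n.choose j : ℚ[X]) * (qsPoly (range j) *
      (X * (1 - X) * derivative (qsPoly (range (n - j)))
        + (2 * ((n - j : ℕ) : ℚ[X]) + 1) * X * qsPoly (range (n - j)))) := by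
  have hx : 0 ∈ range (n + 1) := by simp
  have hmin : ∀ y ∈ (range (n + 1)).erase 0, 0 < y := by
    intro y hy
    exact Nat.pos_of_ne_zero (Finset.ne_of_mem_erase hy)
  have hc : ((range (n + 1)).erase 0).card = n := by
    rw [Finset.card_erase_of_mem hx]; simp
  rw [qsPoly_rec hx hmin]
  have := Finset.sum_powerset_apply_card (fun j => qsPoly (range j) *
      (X * (1 - X) * derivative (qsPoly (range (n - j)))
        + (2 * ((n - j : ℕ) : ℚ[X]) + 1) * X * qsPoly (range (n - j)))) (x := (range (n + 1)).erase 0)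
  rw [hc] at this
  simp only [nsmul_eq_mul] at this
  rw [← this]
  refine Finset.sum_congr rfl fun T hT => ?_
  rw [Finset.mem_powerset] at hT
  have h2 := Finset.card_sdiff_of_subset hT
  rw [hc] at h2
  rw [qsPoly_card T.card T rfl, qsPoly_card (n - T.card) (((range (n + 1)).erase 0) \ T) h2, h2]

theorem desL_ofFn : ∀ {N : ℕ} (g : Fin N → ℕ), desL (List.ofFn g) = desW g
  | 0, g => by simp [desL, desW]
  | 1, g => by
    have : (univ.filter fun i : Fin 1 =>
        (i : ℕ) + 1 = 1 ∨ ∃ h : (i : ℕ) + 1 < 1, g ⟨(i : ℕ) + 1, h⟩ < g i) = univ :=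
      Finset.filter_true_of_mem (fun i _ => Or.inl (by omega))
    rw [desW, this]
    simp [desL]
  | N + 2, g => by
    have ih := desL_ofFn (fun i : Fin (N + 1) => g i.succ)
    rw [List.ofFn_succ] at ih ⊢
    rw [List.ofFn_succ]
    simp only [desL]
    rw [ih, desW, desW, Finset.card_filter, Finset.card_filter, Fin.sum_univ_succ (n := N + 1)]
    congr 1
    · refine if_congr ?_ rfl rfl
      constructor
      · intro h
        exact Or.inr ⟨by simp, h⟩
      · rintro (h | ⟨h1, h2⟩)
        · simp at h
        · exact h2
    · refine Finset.sum_congr rfl fun i _ => ?_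
      refine if_congr ?_ rfl rfl
      constructor
      · rintro (h | ⟨h1, h2⟩)
        · exact Or.inl (by simp [Fin.val_succ]; omega)
        · exact Or.inr ⟨by simp [Fin.val_succ]; omega, h2⟩
      · rintro (h | ⟨h1, h2⟩)
        · exact Or.inl (by simp [Fin.val_succ] at h; omega)
        · exact Or.inr ⟨by simp [Fin.val_succ] at h1; omega, h2⟩

theorem nonCross_ofFn {N : ℕ} (g : Fin N → ℕ) : NonCross (List.ofFn g) ↔
    ∀ i j l p : Fin N, i < j → j < l → l < p → g i = g l → g j = g p → g i = g j := by
  rw [List.ofFn_eq_map]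
  constructor
  · intro h i j l p hij hjl hlp h1 h2
    by_contra hne
    refine h (g i) (g j) hne ?_
    rw [List.sublist_map_iff]
    have hil := hij.trans hjl
    have hjp := hjl.trans hlp
    have hip := hij.trans hjp
    refine ⟨[i, j, l, p], ?_, by simp [h1, h2]⟩
    refine List.sublist_of_subperm_of_sortedLE ?_ ?_ (List.sortedLT_finRange N).sortedLE
    · refine List.subperm_of_subset ?_ (fun x _ => List.mem_finRange x)
      simp [hij.ne, hjl.ne, hlp.ne, hil.ne, hjp.ne, hip.ne]
    · refine List.Pairwise.sortedLE ?_
      simp [hij.le, hjl.le, hlp.le, hil.le, hjp.le, hip.le]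
  · intro h a b hab hs
    obtain ⟨l', hl', e⟩ := List.sublist_map_iff.1 hs
    have hp := (List.pairwise_lt_finRange N).sublist hl'
    match l', e, hp with
    | [_, _, _], e, _ => simp at e
    | _ :: _ :: _ :: _ :: _ :: _, e, _ => simp at e
    | [i, j, l, p], e, hp =>
      simp only [List.map_cons, List.map_nil, List.cons.injEq, and_true] at e
      simp only [List.pairwise_cons, List.mem_cons, List.not_mem_nil, or_false] at hp
      obtain ⟨e1, e2, e3, e4⟩ := e
      have := h i j l p (hp.1 j (by simp)) (hp.2.1 l (by simp)) (hp.2.2.1 p rfl)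
        (by rw [← e1, ← e3]) (by rw [← e2, ← e4])
      exact hab (by rw [e1, e2, this])

theorem count_ofFn' {N : ℕ} (g : Fin N → ℕ) (a : ℕ) :
    (List.ofFn g).count a = (univ.filter fun i => g i = a).card := by
  rw [Finset.card_filter]
  induction N with
  | zero => simp
  | succ N ih =>
    rw [List.ofFn_succ, List.count_cons, ih, Fin.sum_univ_succ, add_comm]
    simp

theorem mem_QS_ofFn {n : ℕ} (w : Fin (2 * n) → Fin n) :
    List.ofFn (fun i => (w i : ℕ)) ∈ QS (range n) ↔ w ∈ quasiStirlingSet n := by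
  rw [mem_QS, nonCross_ofFn, quasiStirlingSet, Finset.mem_filter]
  simp only [mem_univ, true_and, count_ofFn', Fin.val_inj]
  refine and_congr_left fun _ => ?_
  constructor
  · intro h a
    have := h a
    simpa [Fin.val_inj] using this
  · intro h a
    by_cases ha : a < n
    · have := h ⟨a, ha⟩
      simp only [Fin.ext_iff] at this
      simpa [ha] using this
    · rw [if_neg (by simpa using ha), Finset.card_eq_zero, Finset.filter_eq_empty_iff]
      intro i _ e
      exact ha (e ▸ (w i).isLt)

open Polynomial in
theorem qsPoly_eq (n : ℕ) : qsPoly (range n) = ∑ w ∈ quasiStirlingSet n, (X : ℚ[X]) ^ desW w := by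
  rw [qsPoly]
  symm
  refine Finset.sum_bij (fun w _ => List.ofFn (fun i => (w i : ℕ))) ?_ ?_ ?_ ?_
  · intro w hw
    exact (mem_QS_ofFn w).2 hw
  · intro w _ w' _ e
    have := List.ofFn_injective e
    funext i
    exact Fin.ext (congrFun this i)
  · intro l hl
    have hlen : l.length = 2 * n := by rw [QS_length hl, card_range]
    have hlt : ∀ i : Fin (2 * n), l[(i : ℕ)]'(by rw [hlen]; exact i.isLt) < n := by
      intro i
      have := (QS_mem hl (l[(i : ℕ)]'(by rw [hlen]; exact i.isLt))).1 (List.getElem_mem _)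
      simpa using this
    have e : List.ofFn (fun i : Fin (2 * n) =>
        ((⟨l[(i : ℕ)]'(by rw [hlen]; exact i.isLt), hlt i⟩ : Fin n) : ℕ)) = l := by
      apply List.ext_getElem
      · simp [hlen]
      · intro i h1 h2
        simp
    refine ⟨fun i => ⟨l[(i : ℕ)]'(by rw [hlen]; exact i.isLt), hlt i⟩, ?_, e⟩
    rw [← mem_QS_ofFn, e]
    exact hl
  · intro w _
    rw [desL_ofFn]
    simp [desW]

/-- The number of quasi-Stirling permutations of size `n` with `m + 1` descents
equals the number of injections from `{1, …, n-1}` to `{1, …, 2n}` with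
exactly `m` excedances. -/
theorem card_des_eq_card_injections (n m : ℕ) (hn : 1 ≤ n) :
    ((quasiStirlingSet n).filter fun w => desW w = m + 1).card
      = (univ.filter fun f : Fin (n - 1) → Fin (2 * n) =>
          Function.Injective f ∧ excCount f = m).card := by
  obtain ⟨n, rfl⟩ : ∃ k, n = k + 1 := ⟨n - 1, by omega⟩
  have h := master (fun k => qsPoly (range k)) (by simp [qsPoly_empty]) qsPoly_range_rec n
  simp only [qsPoly_eq] at h
  have h2 := congrArg (fun p => Polynomial.coeff p (m + 1)) h
  simp only [Polynomial.coeff_X_mul, injPoly, Polynomial.finsetSum_coeff, Polynomial.coeff_X_pow,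
    Finset.sum_boole] at h2
  have h3 : ((quasiStirlingSet (n + 1)).filter fun w => m + 1 = desW w).card
      = ((univ.filter fun f : Fin n → Fin (2 * (n + 1)) => Function.Injective f).filter
        fun f => m = excCount f).card := by exact_mod_cast h2
  rw [Finset.filter_filter] at h3
  simp only [eq_comm (a := m + 1), eq_comm (a := m)] at h3
  exact h3
end
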